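/- arXiv:2208.02085 — 2 statements merged into one kernel-verified Lean document; each statement's English description precedes it below -/
import Mathlib

section
/- Adapted Lemma 2.1 of Takahasi (item (2)): suppose Φ₂ is 2π-periodic and C², its zero set within [0, 2π) is exactly S = {0, π} with Φ₂'(0) ≠ 0 and Φ₂'(π) ≠ 0, and its critical set within [0, 2π) is exactly C = {π/2, 3π/2} with Φ₂''(π/2) ≠ 0 and Φ₂''(3π/2) ≠ 0. Then there exist K₀ > 1, ε > 0 and K* > 0 such that for every K ≥ K*, every a, ξ ∈ ℝ and every x ∈ [0, 2π): (i) if Φ₂(x) ≠ 0 and the distance from x to the set C + 2πℤ is at least ε, then |h_a'(x)| ≥ (K/K₀)·ε; and (ii) if the distance from x to C + 2πℤ is at most ε, then Φ₂(x) ≠ 0 and K/K₀ < |h_a''(x)| < K·K₀. -/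
open Real

/-- The circle map with singularities `h_a(x) = x + ξ + a − K·ln|Φ₂(x)|`. -/
noncomputable def ha (Φ₂ : ℝ → ℝ) (K a ξ : ℝ) (x : ℝ) : ℝ :=
  x + ξ + a - K * Real.log |Φ₂ x|

/-- The critical set `C + 2πℤ = {π/2, 3π/2} + 2πℤ`, lifted to `ℝ`. -/
def critSet : Set ℝ :=
  {y | ∃ k : ℤ, y = π / 2 + 2 * π * k ∨ y = 3 * π / 2 + 2 * π * k}

/-!
Where `Φ ≠ 0`, the derivatives of `h = ha Φ K a ξ` are `h' = 1 - K * logDeriv Φ` and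
`h'' = -K * (logDeriv Φ)'`; for large `K` the summand `1` is negligible, so both estimates are
statements about the logarithmic derivative `Φ'/Φ`.
Away from the critical points `Φ/Φ'` extends continuously over the zeros of `Φ`, hence is bounded
by periodicity, which bounds `|Φ'/Φ|` from below. At a critical point `(Φ'/Φ)' = Φ''/Φ ≠ 0`, so by
continuity and periodicity `|(Φ'/Φ)'|` is bounded above and below on a uniform neighbourhood of
the critical set.
-/

open Function Metric

section Periodic

variable {𝕜 F : Type*} [NontriviallyNormedField 𝕜]

lemma periodic_deriv [NormedAddCommGroup F] [NormedSpace 𝕜 F] {f : 𝕜 → F} {c : 𝕜}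
    (hf : Periodic f c) : Periodic (deriv f) c := fun x ↦ by
  rw [← deriv_comp_add_const, hf.funext]

lemma periodic_mem_setOf_deriv_eq_zero [NormedAddCommGroup F] [NormedSpace 𝕜 F] {f : 𝕜 → F} {c : 𝕜}
    (hf : Periodic f c) : Periodic (· ∈ {x | deriv f x = 0}) c :=
  (periodic_deriv hf).comp (· = 0)

lemma periodic_logDeriv [NontriviallyNormedField F] [NormedAlgebra 𝕜 F] {f : 𝕜 → F} {c : 𝕜}
    (hf : Periodic f c) : Periodic (logDeriv f) c :=
  (periodic_deriv hf).div hf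

lemma periodic_infDist {E : Type*} [SeminormedAddCommGroup E] {S : Set E} {c : E}
    (hS : Periodic (· ∈ S) c) : Periodic (infDist · S) c := fun x ↦ by
  have image_add : (· + c) '' S = S := by
    ext y
    rw [Set.image_add_right, Set.mem_preimage, ← sub_eq_add_neg]
    exact (hS.sub_eq y).to_iff
  calc infDist (x + c) S = infDist (x + c) ((· + c) '' S) := by rw [image_add]
    _ = infDist x S := infDist_image (isometry_add_right c)

end Periodic

section PeriodicOnReal

variable {T : ℝ} {S U : Set ℝ}

lemma exists_norm_le_of_continuousOn_of_periodic {E : Type*} [SeminormedAddCommGroup E] {f : ℝ → E}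
    (hT : 0 < T) (hS : IsClosed S) (hST : Periodic (· ∈ S) T) (hf : ContinuousOn f S)
    (hfT : Periodic f T) :
    ∃ B > 0, ∀ x ∈ S, ‖f x‖ ≤ B := by
  obtain ⟨B, hB⟩ := (isCompact_Icc.inter_left hS).exists_bound_of_continuousOn
    (hf.mono Set.inter_subset_left : ContinuousOn f (S ∩ Set.Icc 0 T))
  refine ⟨max B 1, by positivity, fun x hx ↦ ?_⟩
  obtain ⟨y, hy, hxy⟩ := Periodic.exists_mem_Ico₀ (f := fun x ↦ (f x, x ∈ S))
    (fun x ↦ Prod.ext (hfT x) (hST x)) hT x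
  obtain ⟨hfxy, hSxy⟩ := Prod.ext_iff.1 hxy
  have hyS : y ∈ S := hSxy.to_iff.1 hx
  calc ‖f x‖ = ‖f y‖ := congrArg norm hfxy
    _ ≤ B := hB y ⟨hyS, Set.Ico_subset_Icc_self hy⟩
    _ ≤ max B 1 := le_max_left B 1

lemma exists_forall_infDist_le_mem_of_periodic (hT : 0 < T) (hS : IsClosed S) (hne : S.Nonempty)
    (hST : Periodic (· ∈ S) T) (hU : IsOpen U) (hUT : Periodic (· ∈ U) T) (hSU : S ⊆ U) :
    ∃ ε > 0, ∀ x, infDist x S ≤ ε → x ∈ U := by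
  have infDist_pos : ∀ x ∈ Uᶜ, 0 < infDist x S := fun x hx ↦
    (hS.notMem_iff_infDist_pos hne).1 fun hxS ↦ hx (hSU hxS)
  obtain ⟨B, hB, hle⟩ := exists_norm_le_of_continuousOn_of_periodic hT hU.isClosed_compl
    (hUT.comp Not)
    ((continuous_infDist_pt S).continuousOn.inv₀ fun x hx ↦ (infDist_pos x hx).ne')
    ((periodic_infDist hST).comp (·⁻¹))
  refine ⟨(2 * B)⁻¹, by positivity, fun x hx ↦ by_contra fun hxU ↦ ?_⟩
  have hinv : (infDist x S)⁻¹ ≤ B := (le_abs_self _).trans (hle x hxU)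
  have hlt : (2 * B)⁻¹ < B⁻¹ := inv_strictAnti₀ hB (by linarith)
  exact (hx.trans_lt hlt).not_ge (inv_le_of_inv_le₀ (infDist_pos x hxU) hinv)

end PeriodicOnReal

section LogDeriv

variable {Φ : ℝ → ℝ} {T : ℝ}

lemma deriv_logDeriv_of_deriv_eq_zero {𝕜 : Type*} [NontriviallyNormedField 𝕜] {f : 𝕜 → 𝕜} {c : 𝕜}
    (hd : DifferentiableAt 𝕜 f c) (hd' : DifferentiableAt 𝕜 (deriv f) c) (hf : f c ≠ 0)
    (hc : deriv f c = 0) : deriv (logDeriv f) c = deriv (deriv f) c / f c := by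
  rw [logDeriv, deriv_div hd' hd hf, hc]
  field_simp
  ring

lemma contDiffOn_logDeriv {n : WithTop ℕ∞} (hΦ : ContDiff ℝ (n + 1) Φ) :
    ContDiffOn ℝ n (logDeriv Φ) {x | Φ x ≠ 0} :=
  hΦ.deriv'.contDiffOn.div (hΦ.of_le le_self_add).contDiffOn fun _ hx ↦ hx

lemma continuousOn_deriv_logDeriv (hΦ : ContDiff ℝ 2 Φ) :
    ContinuousOn (deriv (logDeriv Φ)) {x | Φ x ≠ 0} :=
  (contDiffOn_logDeriv (n := 1) hΦ).continuousOn_deriv_of_isOpen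
    (isOpen_ne_fun hΦ.continuous continuous_const) le_rfl

lemma exists_inv_le_abs_logDeriv_of_le_infDist (hT : 0 < T) (hper : Periodic Φ T)
    (hΦ : ContDiff ℝ 1 Φ) {ε : ℝ} (hε : 0 < ε) :
    ∃ B > 0, ∀ x, Φ x ≠ 0 → ε ≤ infDist x {x | deriv Φ x = 0} → B⁻¹ ≤ |logDeriv Φ x| := by
  set crit := {x | deriv Φ x = 0}
  have deriv_ne_zero : ∀ x ∈ {x | ε ≤ infDist x crit}, deriv Φ x ≠ 0 := fun x hx hx' ↦
    (hε.trans_le hx).ne' (infDist_zero_of_mem hx')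
  obtain ⟨B, hB, hle⟩ := exists_norm_le_of_continuousOn_of_periodic hT
    (isClosed_le continuous_const (continuous_infDist_pt crit))
    ((periodic_infDist (periodic_mem_setOf_deriv_eq_zero hper)).comp (ε ≤ ·))
    (hΦ.continuous.continuousOn.div hΦ.continuous_deriv_one.continuousOn deriv_ne_zero)
    (hper.div (periodic_deriv hper))
  refine ⟨B, hB, fun x hx hdist ↦ ?_⟩
  have hpos : 0 < |logDeriv Φ x| := abs_pos.2 (div_ne_zero (deriv_ne_zero x hdist) hx)
  refine inv_le_of_inv_le₀ hpos ?_
  calc |logDeriv Φ x|⁻¹ = |Φ x / deriv Φ x| := by rw [← abs_inv, logDeriv_apply, inv_div]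
    _ ≤ B := hle x hdist

lemma exists_forall_infDist_le_deriv_logDeriv_ne_zero (hT : 0 < T) (hper : Periodic Φ T)
    (hΦ : ContDiff ℝ 2 Φ) (hcrit : ∀ c, deriv Φ c = 0 → Φ c ≠ 0 ∧ deriv (deriv Φ) c ≠ 0) :
    ∃ ε > 0, ∀ x, infDist x {x | deriv Φ x = 0} ≤ ε → Φ x ≠ 0 ∧ deriv (logDeriv Φ) x ≠ 0 := by
  have hderiv : ContDiff ℝ 1 (deriv Φ) := ContDiff.deriv' hΦ
  obtain ⟨c, -, hc⟩ := exists_deriv_eq_zero hT hΦ.continuous.continuousOn hper.eq.symm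
  refine exists_forall_infDist_le_mem_of_periodic
    (U := {x | Φ x ≠ 0 ∧ deriv (logDeriv Φ) x ≠ 0}) hT
    (isClosed_eq hderiv.continuous continuous_const) ⟨c, hc⟩
    (periodic_mem_setOf_deriv_eq_zero hper) ?_ ?_ fun c hc ↦ ?_
  · exact (continuousOn_deriv_logDeriv hΦ).isOpen_inter_preimage
      (isOpen_ne_fun hΦ.continuous continuous_const) isOpen_ne
  · intro x
    simp only [Set.mem_ofPred_eq, hper x, periodic_deriv (periodic_logDeriv hper) x]
  · obtain ⟨hc₀, hc₂⟩ := hcrit c hc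
    refine ⟨hc₀, ?_⟩
    rw [deriv_logDeriv_of_deriv_eq_zero (hΦ.differentiable two_ne_zero c)
      (hderiv.differentiable one_ne_zero c) hc₀ hc]
    exact div_ne_zero hc₂ hc₀

lemma exists_abs_deriv_logDeriv_mem_Ioo (hT : 0 < T) (hper : Periodic Φ T)
    (hΦ : ContDiff ℝ 2 Φ) (hcrit : ∀ c, deriv Φ c = 0 → Φ c ≠ 0 ∧ deriv (deriv Φ) c ≠ 0) :
    ∃ B > 1, ∃ ε > 0, ∀ x, infDist x {x | deriv Φ x = 0} ≤ ε →
      Φ x ≠ 0 ∧ |deriv (logDeriv Φ) x| ∈ Set.Ioo B⁻¹ B := by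
  set crit := {x | deriv Φ x = 0}
  obtain ⟨ε, hε, hne⟩ := exists_forall_infDist_le_deriv_logDeriv_ne_zero hT hper hΦ hcrit
  have hclosed : IsClosed {x | infDist x crit ≤ ε} :=
    isClosed_le (continuous_infDist_pt crit) continuous_const
  have hclosedT : Periodic (· ∈ {x | infDist x crit ≤ ε}) T :=
    (periodic_infDist (periodic_mem_setOf_deriv_eq_zero hper)).comp (· ≤ ε)
  have hcont : ContinuousOn (deriv (logDeriv Φ)) {x | infDist x crit ≤ ε} :=
    (continuousOn_deriv_logDeriv hΦ).mono fun x hx ↦ (hne x hx).1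
  have hderivT : Periodic (deriv (logDeriv Φ)) T := periodic_deriv (periodic_logDeriv hper)
  obtain ⟨B₁, hB₁, hle⟩ :=
    exists_norm_le_of_continuousOn_of_periodic hT hclosed hclosedT hcont hderivT
  obtain ⟨B₂, hB₂, hinv_le⟩ := exists_norm_le_of_continuousOn_of_periodic hT hclosed hclosedT
    (hcont.inv₀ fun x hx ↦ (hne x hx).2) (hderivT.comp (·⁻¹))
  refine ⟨B₁ + B₂ + 1, by linarith, ε, hε, fun x hx ↦ ⟨(hne x hx).1, ?_, ?_⟩⟩
  · have hinv : |deriv (logDeriv Φ) x|⁻¹ ≤ B₂ := by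
      rw [← abs_inv]
      exact hinv_le x hx
    exact inv_lt_of_inv_lt₀ (abs_pos.2 (hne x hx).2) (by linarith)
  · exact (hle x hx).trans_lt (by linarith)

end LogDeriv

section CircleMap

variable {Φ : ℝ → ℝ} {K a ξ x : ℝ}

lemma deriv_ha (hd : DifferentiableAt ℝ Φ x) (hx : Φ x ≠ 0) :
    deriv (ha Φ K a ξ) x = 1 - K * logDeriv Φ x := by
  have ha_eq : ha Φ K a ξ = fun y ↦ y + ξ + a - K * Real.log (Φ y) := by
    funext y
    rw [ha, Real.log_abs]
  rw [ha_eq]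
  exact ((((hasDerivAt_id x).add_const ξ).add_const a).sub
    ((hd.hasDerivAt.log hx).const_mul K)).deriv

lemma deriv_deriv_ha (hd : Differentiable ℝ Φ) (hx : Φ x ≠ 0) :
    deriv (deriv (ha Φ K a ξ)) x = -(K * deriv (logDeriv Φ) x) := by
  have deriv_ha_eventuallyEq : deriv (ha Φ K a ξ) =ᶠ[nhds x] fun y ↦ 1 - K * logDeriv Φ y := by
    filter_upwards [hd.continuous.continuousAt.eventually_ne hx] with y hy
    exact deriv_ha (hd y) hy
  rw [deriv_ha_eventuallyEq.deriv_eq, deriv_const_sub, deriv_const_mul_field]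

lemma div_two_mul_le_abs_deriv_ha {B : ℝ} (hB : 0 < B) (hK : 2 * B ≤ K)
    (hd : DifferentiableAt ℝ Φ x) (hx : Φ x ≠ 0) (hlog : B⁻¹ ≤ |logDeriv Φ x|) :
    K / (2 * B) ≤ |deriv (ha Φ K a ξ) x| := by
  have hK₀ : 0 ≤ K := by linarith
  have one_le : 1 ≤ K / (2 * B) := (one_le_div (by positivity)).2 hK
  calc K / (2 * B) ≤ K / (2 * B) + (K / (2 * B) - 1) := by linarith
    _ = K * B⁻¹ - 1 := by field_simp; ring
    _ ≤ K * |logDeriv Φ x| - 1 := by gcongr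
    _ = |K * logDeriv Φ x| - |1| := by rw [abs_mul, abs_of_nonneg hK₀, abs_one]
    _ ≤ |K * logDeriv Φ x - 1| := abs_sub_abs_le_abs_sub _ _
    _ = |deriv (ha Φ K a ξ) x| := by rw [deriv_ha hd hx, abs_sub_comm]

lemma abs_deriv_deriv_ha_mem_Ioo {B : ℝ} (hK : 0 < K) (hd : Differentiable ℝ Φ) (hx : Φ x ≠ 0)
    (hlog : |deriv (logDeriv Φ) x| ∈ Set.Ioo B⁻¹ B) :
    |deriv (deriv (ha Φ K a ξ)) x| ∈ Set.Ioo (K / B) (K * B) := by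
  rw [deriv_deriv_ha hd hx, abs_neg, abs_mul, abs_of_pos hK, div_eq_mul_inv]
  exact ⟨mul_lt_mul_of_pos_left hlog.1 hK, mul_lt_mul_of_pos_left hlog.2 hK⟩

end CircleMap

section CritSet

lemma forall_mem_critSet_iff_of_periodic {P : ℝ → Prop} (hP : Periodic P (2 * π)) :
    (∀ c ∈ critSet, P c) ↔ P (π / 2) ∧ P (3 * π / 2) := by
  refine ⟨fun h ↦ ⟨h _ ⟨0, by simp⟩, h _ ⟨0, by simp⟩⟩, ?_⟩
  rintro ⟨h₁, h₂⟩ _ ⟨k, rfl | rfl⟩ <;> rw [mul_comm (2 * π), hP.int_mul k]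
  exacts [h₁, h₂]

lemma setOf_eq_zero_eq_critSet {g : ℝ → ℝ} (hg : Periodic g (2 * π))
    (hzero : ∀ x ∈ Set.Ico (0 : ℝ) (2 * π), g x = 0 ↔ x = π / 2 ∨ x = 3 * π / 2) :
    {x | g x = 0} = critSet := by
  have hpi := pi_pos
  refine Set.Subset.antisymm (fun x hx ↦ ?_) ((forall_mem_critSet_iff_of_periodic
    (hg.comp (· = 0))).2 ⟨(hzero _ ?_).2 (.inl rfl), (hzero _ ?_).2 (.inr rfl)⟩)
  · obtain ⟨k, hk, -⟩ := existsUnique_sub_zsmul_mem_Ico two_pi_pos x 0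
    rw [zero_add] at hk
    have hroot := (hzero _ hk).1 ((hg.sub_zsmul_eq k).trans hx)
    rw [zsmul_eq_mul, mul_comm, sub_eq_iff_eq_add, sub_eq_iff_eq_add] at hroot
    exact ⟨k, hroot⟩
  · constructor <;> linarith
  · constructor <;> linarith

lemma ne_zero_of_mem_critSet {f : ℝ → ℝ} (hf : Periodic f (2 * π))
    (hzero : ∀ x ∈ Set.Ico (0 : ℝ) (2 * π), f x = 0 → x = 0 ∨ x = π) :
    ∀ c ∈ critSet, f c ≠ 0 := by
  have hpi := pi_pos
  refine (forall_mem_critSet_iff_of_periodic (hf.comp (· ≠ 0))).2 ⟨fun h ↦ ?_, fun h ↦ ?_⟩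
  · rcases hzero (π / 2) ⟨by linarith, by linarith⟩ h with h | h <;> linarith
  · rcases hzero (3 * π / 2) ⟨by linarith, by linarith⟩ h with h | h <;> linarith

end CritSet

theorem statement12_general {Φ : ℝ → ℝ} {T : ℝ} (hT : 0 < T) (hper : Periodic Φ T)
    (hC2 : ContDiff ℝ 2 Φ) (hcrit : ∀ c, deriv Φ c = 0 → Φ c ≠ 0 ∧ deriv (deriv Φ) c ≠ 0) :
    ∃ K₀ > (1 : ℝ), ∃ ε > (0 : ℝ), ∃ Kstar > (0 : ℝ),
      ∀ K : ℝ, Kstar ≤ K → ∀ a ξ x : ℝ,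
        (Φ x ≠ 0 → ε ≤ infDist x {x | deriv Φ x = 0} →
          K / K₀ * ε ≤ |deriv (ha Φ K a ξ) x|) ∧
        (infDist x {x | deriv Φ x = 0} ≤ ε →
          Φ x ≠ 0 ∧ K / K₀ < |deriv (deriv (ha Φ K a ξ)) x| ∧
            |deriv (deriv (ha Φ K a ξ)) x| < K * K₀) := by
  have hd : Differentiable ℝ Φ := hC2.differentiable two_ne_zero
  obtain ⟨B₂, hB₂, ε, hε, near⟩ := exists_abs_deriv_logDeriv_mem_Ioo hT hper hC2 hcrit
  obtain ⟨B₁, hB₁, away⟩ :=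
    exists_inv_le_abs_logDeriv_of_le_infDist hT hper (hC2.of_le one_le_two) hε
  have hK₀ : 1 < max B₂ (2 * B₁ * ε) := lt_max_of_lt_left hB₂
  refine ⟨max B₂ (2 * B₁ * ε), hK₀, ε, hε, 2 * B₁, by positivity, fun K hK a ξ x ↦ ⟨?_, ?_⟩⟩
  · intro hx hdist
    have hKpos : 0 < K := by linarith
    calc K / max B₂ (2 * B₁ * ε) * ε ≤ K / (2 * B₁ * ε) * ε := by
          gcongr
          exact le_max_right _ _
      _ = K / (2 * B₁) := by field_simp
      _ ≤ _ := div_two_mul_le_abs_deriv_ha hB₁ hK (hd x) hx (away x hx hdist)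
  · intro hdist
    have hKpos : 0 < K := by linarith
    obtain ⟨hx, hlower, hupper⟩ := near x hdist
    have hB : B₂ ≤ max B₂ (2 * B₁ * ε) := le_max_left _ _
    refine ⟨hx, abs_deriv_deriv_ha_mem_Ioo hKpos hd hx ⟨?_, hupper.trans_le hB⟩⟩
    exact (inv_anti₀ (by linarith) hB).trans_lt hlower

/-- Adapted Lemma 2.1(2) of Takahasi: under the stated hypotheses on the `2π`-periodic `C²`
map `Φ₂` (zeros exactly `{0, π}` in `[0,2π)`, nondegenerate; critical points exactly
`{π/2, 3π/2}` in `[0,2π)`, nondegenerate), there are `K₀ > 1`, `ε > 0`, `K* > 0` such that for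
`K ≥ K*`, all `a, ξ` and all `x ∈ [0,2π)`:
(i) if `Φ₂(x) ≠ 0` and `dist(x, C + 2πℤ) ≥ ε` then `|h_a'(x)| ≥ (K/K₀)·ε`;
(ii) if `dist(x, C + 2πℤ) ≤ ε` then `Φ₂(x) ≠ 0` and `K/K₀ < |h_a''(x)| < K·K₀`. -/
theorem statement12 (Φ₂ : ℝ → ℝ)
    (hper : ∀ x, Φ₂ (x + 2 * π) = Φ₂ x)
    (hC2 : ContDiff ℝ 2 Φ₂)
    (hzero : ∀ x ∈ Set.Ico (0 : ℝ) (2 * π), (Φ₂ x = 0 ↔ x = 0 ∨ x = π))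
    (hz1 : deriv Φ₂ 0 ≠ 0) (hz2 : deriv Φ₂ π ≠ 0)
    (hcrit : ∀ x ∈ Set.Ico (0 : ℝ) (2 * π), (deriv Φ₂ x = 0 ↔ x = π / 2 ∨ x = 3 * π / 2))
    (hc1 : deriv (deriv Φ₂) (π / 2) ≠ 0) (hc2 : deriv (deriv Φ₂) (3 * π / 2) ≠ 0) :
    ∃ K₀ > (1 : ℝ), ∃ ε > (0 : ℝ), ∃ Kstar > (0 : ℝ),
      ∀ K : ℝ, Kstar ≤ K → ∀ a ξ : ℝ, ∀ x ∈ Set.Ico (0 : ℝ) (2 * π),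
        (Φ₂ x ≠ 0 → ε ≤ Metric.infDist x critSet →
          K / K₀ * ε ≤ |deriv (ha Φ₂ K a ξ) x|) ∧
        (Metric.infDist x critSet ≤ ε →
          Φ₂ x ≠ 0 ∧ K / K₀ < |deriv (deriv (ha Φ₂ K a ξ)) x| ∧
            |deriv (deriv (ha Φ₂ K a ξ)) x| < K * K₀) := by
  have hper' : Periodic Φ₂ (2 * π) := hper
  have hcritSet : {x | deriv Φ₂ x = 0} = critSet :=
    setOf_eq_zero_eq_critSet (periodic_deriv hper') hcrit
  have deriv_deriv_ne_zero : ∀ c ∈ critSet, deriv (deriv Φ₂) c ≠ 0 :=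
    (forall_mem_critSet_iff_of_periodic
      ((periodic_deriv (periodic_deriv hper')).comp (· ≠ 0))).2 ⟨hc1, hc2⟩
  obtain ⟨K₀, hK₀, ε, hε, Kstar, hKstar, hbounds⟩ :=
    statement12_general two_pi_pos hper' hC2 fun c hc ↦
      have hc' : c ∈ critSet := hcritSet ▸ hc
      ⟨ne_zero_of_mem_critSet hper' (fun x hx ↦ (hzero x hx).1) c hc', deriv_deriv_ne_zero c hc'⟩
  rw [hcritSet] at hbounds
  exact ⟨K₀, hK₀, ε, hε, Kstar, hKstar, fun K hK a ξ x _ ↦ hbounds K hK a ξ x⟩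
end

section
/- Covering lemma near the singularity (Lemma 'cover S1' for the model map): let K > 0, a, ξ ∈ ℝ, h(x) = x + ξ + a − K·ln(sin x) on (0, π), and let n₀ be the least integer with 2πn₀ ≥ h(arctan K). Then there is a strictly increasing sequence (c_n)_{n ∈ ℕ} contained in [arctan K, π), converging to π, such that for each n: c_n is the unique point of [arctan K, π) with h(c_n) = 2π(n₀ + n); h is strictly increasing (hence injective) on [c_n, c_{n+1}]; and h([c_n, c_{n+1}]) = [2π(n₀+n), 2π(n₀+n+1)]. Consequently, for every n and every t ∈ ℝ there exists x ∈ (c_n, c_{n+1}] with h(x) ≡ t (mod 2π), i.e. h maps each interval (c_n, c_{n+1}] onto the whole circle ℝ/2πℤ. -/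
open Filter Topology Real

/-- The model singular circle map `h(x) = x + ξ + a − K·ln(sin x)` on `(0, π)`. -/
noncomputable def h (K a ξ : ℝ) (x : ℝ) : ℝ :=
  x + ξ + a - K * Real.log (Real.sin x)

/-!
Since `K = tan (arctan K)`, the derivative `1 - K cot x` of `h` is positive on `(arctan K, π)`, and
`h` tends to `+∞` at `π` because `sin x → 0⁺`. Hence `h` takes each value above `h (arctan K)`
exactly once on `[arctan K, π)`, and the preimages of an arithmetic progression of step `2π`
increase to `π`.
-/

open Set

theorem tendsto_nhds_right_of_monotoneOn_Ico {ι α δ : Type*} [LinearOrder α] [TopologicalSpace α]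
    [OrderTopology α] [Preorder δ] [NoMaxOrder δ] {a b : α} {f : α → δ} {l : Filter ι} {c : ι → α}
    (hab : a < b) (hf : MonotoneOn f (Ico a b)) (hc : ∀ i, c i ∈ Ico a b)
    (hfc : Tendsto (fun i => f (c i)) l atTop) : Tendsto c l (𝓝 b) := by
  refine tendsto_order.2
    ⟨fun x hx => ?_, fun x hx => Eventually.of_forall fun i => (hc i).2.trans hx⟩
  have hmax : max x a ∈ Ico a b := ⟨le_max_right x a, max_lt hx hab⟩
  filter_upwards [hfc.eventually_gt_atTop (f (max x a))] with i hi
  exact (le_max_left x a).trans_lt (hf.reflect_lt hmax (hc i) hi)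

section Levels

variable {α δ : Type*} [ConditionallyCompleteLinearOrder α] [TopologicalSpace α] [OrderTopology α]
  [DenselyOrdered α] [LinearOrder δ] [TopologicalSpace δ] [OrderClosedTopology δ]
  {a b : α} {f : α → δ}

theorem surjOn_Ico_Ici_of_tendsto_atTop (hab : a < b) (hf : ContinuousOn f (Ico a b))
    (hlim : Tendsto f (𝓝[<] b) atTop) : SurjOn f (Ico a b) (Ici (f a)) := by
  have : (𝓝[<] b).NeBot := nhdsLT_neBot_of_exists_lt ⟨a, hab⟩
  exact isPreconnected_Ico.intermediate_value_Ici (left_mem_Ico.2 hab)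
    (le_principal_iff.2 (Ico_mem_nhdsLT hab)) hf hlim

theorem exists_strictMono_tendsto_apply_eq [NoMaxOrder δ] {u : ℕ → δ} (hab : a < b)
    (hf : ContinuousOn f (Ico a b)) (hmono : StrictMonoOn f (Ico a b))
    (hlim : Tendsto f (𝓝[<] b) atTop) (hu : StrictMono u) (hu_lim : Tendsto u atTop atTop)
    (hu₀ : f a ≤ u 0) :
    ∃ c : ℕ → α, StrictMono c ∧ (∀ n, c n ∈ Ico a b) ∧ Tendsto c atTop (𝓝 b) ∧
      ∀ n, f (c n) = u n := by
  have hu_ge (n : ℕ) : f a ≤ u n := hu₀.trans (hu.monotone n.zero_le)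
  choose c hc hfc using fun n => surjOn_Ico_Ici_of_tendsto_atTop hab hf hlim (hu_ge n)
  have hc_mono : StrictMono c := fun m n hmn =>
    (hmono.lt_iff_lt (hc m) (hc n)).1 (by simpa only [hfc] using hu hmn)
  exact ⟨c, hc_mono, hc, tendsto_nhds_right_of_monotoneOn_Ico hab hmono.monotoneOn hc
    (by simpa only [hfc] using hu_lim), hfc⟩

end Levels

theorem exists_apply_eq_add_zsmul_of_surjOn_Ioc {α G : Type*} [AddCommGroup G] [LinearOrder G]
    [IsOrderedAddMonoid G] [Archimedean G] {f : α → G} {s : Set α} {y p : G} (hp : 0 < p)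
    (hf : SurjOn f s (Ioc y (y + p))) (t : G) : ∃ x ∈ s, ∃ k : ℤ, f x = t + k • p := by
  obtain ⟨k, hk, -⟩ := existsUnique_add_zsmul_mem_Ioc hp t y
  obtain ⟨x, hx, hfx⟩ := hf hk
  exact ⟨x, hx, k, hfx⟩

theorem mul_cos_lt_sin_of_arctan_lt {K x : ℝ} (hx : arctan K < x) (hx' : x < arctan K + π) :
    K * cos x < sin x := by
  have hcos : 0 < cos (arctan K) := cos_arctan_pos K
  have hsin : sin (arctan K) = K * cos (arctan K) := by
    rw [← tan_mul_cos hcos.ne', tan_arctan]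
  have hsub : 0 < sin (x - arctan K) := sin_pos_of_pos_of_lt_pi (by linarith) (by linarith)
  have hfactor : sin (x - arctan K) = (sin x - K * cos x) * cos (arctan K) := by
    rw [sin_sub, hsin]
    ring
  exact sub_pos.1 (pos_of_mul_pos_left (hfactor ▸ hsub) hcos.le)

theorem arctan_lt_pi (K : ℝ) : arctan K < π :=
  (arctan_lt_pi_div_two K).trans (half_lt_self pi_pos)

theorem Ico_arctan_pi_subset_Ioo {K : ℝ} (hK : 0 < K) : Ico (arctan K) π ⊆ Ioo 0 π :=
  fun _ hx => ⟨(arctan_pos.2 hK).trans_le hx.1, hx.2⟩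

section SingularMap

variable {K a ξ : ℝ}

theorem hasDerivAt_h {x : ℝ} (hx : sin x ≠ 0) :
    HasDerivAt (h K a ξ) (1 - K * (cos x / sin x)) x :=
  (((hasDerivAt_id x).add_const ξ).add_const a).sub (((hasDerivAt_sin x).log hx).const_mul K)

theorem continuousOn_h : ContinuousOn (h K a ξ) (Ioo 0 π) := fun _ hx =>
  (hasDerivAt_h (sin_pos_of_mem_Ioo hx).ne').continuousAt.continuousWithinAt

theorem strictMonoOn_h (hK : 0 < K) : StrictMonoOn (h K a ξ) (Ico (arctan K) π) := by
  refine strictMonoOn_of_deriv_pos (convex_Ico _ _)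
    (continuousOn_h.mono (Ico_arctan_pi_subset_Ioo hK)) fun x hx => ?_
  rw [interior_Ico] at hx
  have hsin : 0 < sin x :=
    sin_pos_of_mem_Ioo (Ico_arctan_pi_subset_Ioo hK (Ioo_subset_Ico_self hx))
  have hlt : K * cos x < sin x :=
    mul_cos_lt_sin_of_arctan_lt hx.1 (by linarith [hx.2, arctan_pos.2 hK])
  rw [(hasDerivAt_h hsin.ne').deriv, sub_pos, ← mul_div_assoc]
  exact (div_lt_one hsin).2 hlt

theorem tendsto_sin_nhdsLT_pi : Tendsto sin (𝓝[<] π) (𝓝[>] 0) := by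
  refine tendsto_nhdsWithin_iff.2 ⟨?_, ?_⟩
  · exact sin_pi ▸ continuous_sin.continuousWithinAt
  · filter_upwards [Ioo_mem_nhdsLT pi_pos] with x hx using sin_pos_of_mem_Ioo hx

theorem tendsto_h_nhdsLT_pi (hK : 0 < K) : Tendsto (h K a ξ) (𝓝[<] π) atTop := by
  have hlog : Tendsto (fun x => K * log (sin x)) (𝓝[<] π) atBot :=
    (tendsto_log_nhdsGT_zero.comp tendsto_sin_nhdsLT_pi).const_mul_atBot hK
  have hlin : Tendsto (fun x => x + ξ + a) (𝓝[<] π) (𝓝 (π + ξ + a)) :=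
    (Continuous.tendsto (by fun_prop) π).mono_left nhdsWithin_le_nhds
  exact hlin.add_atTop (tendsto_neg_atBot_atTop.comp hlog)

end SingularMap

theorem statement16_general (K a ξ : ℝ) (hK : 0 < K) (r : ℝ)
    (hr : h K a ξ (arctan K) ≤ 2 * π * r) :
    ∃ c : ℕ → ℝ, StrictMono c ∧ (∀ n, c n ∈ Ico (arctan K) π) ∧
      Tendsto c atTop (𝓝 π) ∧
      ∀ n : ℕ,
        (h K a ξ (c n) = 2 * π * (r + n) ∧
          ∀ y ∈ Ico (arctan K) π, h K a ξ y = 2 * π * (r + n) → y = c n) ∧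
        StrictMonoOn (h K a ξ) (Icc (c n) (c (n + 1))) ∧
        h K a ξ '' Icc (c n) (c (n + 1)) = Icc (2 * π * (r + n)) (2 * π * (r + n + 1)) ∧
        ∀ t : ℝ, ∃ x ∈ Ioc (c n) (c (n + 1)), ∃ k : ℤ, h K a ξ x = t + 2 * π * k := by
  have hmono : StrictMonoOn (h K a ξ) (Ico (arctan K) π) := strictMonoOn_h hK
  have hcont : ContinuousOn (h K a ξ) (Ico (arctan K) π) :=
    continuousOn_h.mono (Ico_arctan_pi_subset_Ioo hK)
  have hlevel_mono : StrictMono fun n : ℕ => 2 * π * (r + n) :=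
    (Nat.strictMono_cast.const_add r).const_mul two_pi_pos
  have hlevel_lim : Tendsto (fun n : ℕ => 2 * π * (r + n)) atTop atTop :=
    (tendsto_atTop_add_const_left _ r tendsto_natCast_atTop_atTop).const_mul_atTop two_pi_pos
  obtain ⟨c, hc_mono, hc, hc_lim, hhc⟩ := exists_strictMono_tendsto_apply_eq (arctan_lt_pi K)
    hcont hmono (tendsto_h_nhdsLT_pi hK) hlevel_mono hlevel_lim (by simpa using hr)
  refine ⟨c, hc_mono, hc, hc_lim, fun n => ?_⟩
  have hle : c n ≤ c (n + 1) := hc_mono.monotone n.le_succ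
  have hsub : Icc (c n) (c (n + 1)) ⊆ Ico (arctan K) π :=
    Icc_subset_Ico (hc n).1 (hc (n + 1)).2
  have hnext : h K a ξ (c (n + 1)) = 2 * π * (r + n + 1) := by
    rw [hhc, Nat.cast_succ, add_assoc]
  have hsurj : SurjOn (h K a ξ) (Ioc (c n) (c (n + 1)))
      (Ioc (h K a ξ (c n)) (h K a ξ (c n) + 2 * π)) := by
    have hstep : h K a ξ (c n) + 2 * π = h K a ξ (c (n + 1)) := by
      rw [hnext, hhc]
      ring
    exact hstep ▸ intermediate_value_Ioc hle (hcont.mono hsub)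
  refine ⟨⟨hhc n, fun y hy hhy => hmono.injOn hy (hc n) (hhy.trans (hhc n).symm)⟩,
    hmono.mono hsub, ?_, fun t => ?_⟩
  · rw [(hcont.mono hsub).image_Icc_of_monotoneOn hle (hmono.mono hsub).monotoneOn, hhc n, hnext]
  · simpa only [zsmul_eq_mul, mul_comm] using
      exists_apply_eq_add_zsmul_of_surjOn_Ioc two_pi_pos hsurj t

/-- Covering lemma near the singularity: with `n₀` the least integer such that
`2πn₀ ≥ h(arctan K)`, there is a strictly increasing sequence `(c_n) ⊆ [arctan K, π)`
converging to `π` such that each `c_n` is the unique point of `[arctan K, π)` with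
`h(c_n) = 2π(n₀+n)`, `h` is strictly increasing on `[c_n, c_{n+1}]`,
`h([c_n, c_{n+1}]) = [2π(n₀+n), 2π(n₀+n+1)]`, and consequently for every `t ∈ ℝ` there is
`x ∈ (c_n, c_{n+1}]` with `h(x) ≡ t (mod 2π)`. -/
theorem statement16 (K a ξ : ℝ) (hK : 0 < K) (n₀ : ℤ)
    (hn₀ : h K a ξ (Real.arctan K) ≤ 2 * π * n₀)
    (hleast : ∀ m : ℤ, h K a ξ (Real.arctan K) ≤ 2 * π * m → n₀ ≤ m) :
    ∃ c : ℕ → ℝ, StrictMono c ∧ (∀ n, c n ∈ Set.Ico (Real.arctan K) π) ∧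
      Tendsto c atTop (𝓝 π) ∧
      ∀ n : ℕ,
        (h K a ξ (c n) = 2 * π * ((n₀ : ℝ) + n) ∧
          ∀ y ∈ Set.Ico (Real.arctan K) π,
            h K a ξ y = 2 * π * ((n₀ : ℝ) + n) → y = c n) ∧
        StrictMonoOn (h K a ξ) (Set.Icc (c n) (c (n + 1))) ∧
        h K a ξ '' Set.Icc (c n) (c (n + 1))
          = Set.Icc (2 * π * ((n₀ : ℝ) + n)) (2 * π * ((n₀ : ℝ) + n + 1)) ∧
        ∀ t : ℝ, ∃ x ∈ Set.Ioc (c n) (c (n + 1)), ∃ k : ℤ,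
          h K a ξ x = t + 2 * π * k :=
  statement16_general K a ξ hK n₀ hn₀
end
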